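/- Let A be a positively graded Noetherian algebra, M ≠ 0 a finitely generated graded A-module, I a graded A-ideal, and set d := min{ μ : there exists p with (I_{≤μ})·I^p·M = I^{p+1}·M }, where I_{≤μ} is the subideal of I generated by the homogeneous elements of I of degree ≤ μ. Then for every t ≥ 0, end( I^t M / A_+ I^t M ) ≥ indeg(M) + t·d. -/

import Mathlib

/-- The irrelevant ideal of a graded ring: the ideal generated by the homogeneous
elements of positive degree. -/
def irrelevantIdeal (A : Type) [CommRing A] (𝒜 : ℤ → AddSubgroup A) : Ideal A :=
  Ideal.span {a : A | ∃ μ > 0, a ∈ 𝒜 μ}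

/-!
Suppose `N = I ^ t M` satisfies `N_μ ⊆ A₊ N` for all `μ ≥ indeg M + t d`. By a graded Nakayama
argument `N` is then generated in degrees below `indeg M + t d`. An induction on `t` shows that an
element of `N` of such a small degree vanishes if `t = 0` and lies in `I_{≤ d - 1} I ^ (t - 1) M`
otherwise: in a product `s • n` with `s ∈ I` homogeneous, either `deg s ≤ d - 1`, or `deg n` is
small enough for the induction hypothesis. Hence `M = 0` or `I_{≤ d - 1} I ^ (t - 1) M = I ^ t M`,
and both contradict the minimality of `d`.
-/

open DirectSum SetLike

section Homogeneous

variable {ι ιM σ τ A M : Type*} [CommSemiring A] [AddCommMonoid M] [Module A M] [DecidableEq ιM]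
  [SetLike τ M] [AddSubmonoidClass τ M] {ℳ : ιM → τ} [Decomposition ℳ] {N : Submodule A M}

theorem le_of_forall_homogeneous_mem {K : Submodule A M} (hN : N.IsHomogeneous ℳ)
    (hK : ∀ μ, ∀ m ∈ N, m ∈ ℳ μ → m ∈ K) : N ≤ K := by
  classical
  intro m hm
  rw [← sum_support_decompose ℳ m]
  exact K.sum_mem fun j _ => hK j _ (hN j hm) (decompose ℳ m j).2

variable [SetLike σ A] (𝒜 : ι → σ) [VAdd ι ιM] [GradedSMul 𝒜 ℳ]

theorem decompose_smul_mem_of_homogeneous {κ : Type*} [SetLike κ M] [AddSubmonoidClass κ M]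
    {K : κ} {i : ι} {s : A} {μ : ιM} (hN : N.IsHomogeneous ℳ) (hs : s ∈ 𝒜 i)
    (hK : ∀ j, i +ᵥ j = μ → ∀ n ∈ N, n ∈ ℳ j → s • n ∈ K) {n : M} (hn : n ∈ N) :
    (decompose ℳ (s • n) μ : M) ∈ K := by
  classical
  rw [← sum_support_decompose ℳ n, Finset.smul_sum, decompose_sum, DFinsupp.finsetSum_apply,
    AddSubmonoidClass.coe_finsetSum]
  refine sum_mem fun j _ => ?_
  have hsn : s • (decompose ℳ n j : M) ∈ ℳ (i +ᵥ j) :=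
    GradedSMul.smul_mem hs (decompose ℳ n j).2
  by_cases hij : i +ᵥ j = μ
  · rw [← hij, decompose_of_mem_same ℳ hsn]
    exact hK j hij _ (hN j hn) (decompose ℳ n j).2
  · rw [decompose_of_mem_ne ℳ hsn hij]
    exact zero_mem K

theorem decompose_mem_of_mem_span_smul {κ : Type*} [SetLike κ M] [AddSubmonoidClass κ M]
    {K : κ} {S : Set A} {μ : ιM} (hN : N.IsHomogeneous ℳ)
    (hK : ∀ s ∈ S, ∃ i, s ∈ 𝒜 i ∧ ∀ j, i +ᵥ j = μ → ∀ n ∈ N, n ∈ ℳ j → s • n ∈ K)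
    {m : M} (hm : m ∈ Ideal.span S • N) : (decompose ℳ m μ : M) ∈ K := by
  have decompose_add_mem {x y : M} (hx : (decompose ℳ x μ : M) ∈ K)
      (hy : (decompose ℳ y μ : M) ∈ K) : (decompose ℳ (x + y) μ : M) ∈ K := by
    rw [decompose_add]
    exact add_mem hx hy
  refine Submodule.smul_induction_on hm (fun a ha n hn => ?_) fun _ _ => decompose_add_mem
  induction ha using Submodule.span_induction generalizing n with
  | mem s hs =>
    obtain ⟨i, hsi, hsK⟩ := hK s hs
    exact decompose_smul_mem_of_homogeneous 𝒜 hN hsi hsK hn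
  | zero =>
    rw [zero_smul, decompose_zero]
    exact zero_mem K
  | add a b _ _ ha hb =>
    rw [add_smul]
    exact decompose_add_mem (ha n hn) (hb n hn)
  | smul b a _ ha =>
    rw [smul_eq_mul, mul_comm, mul_smul]
    exact ha _ (N.smul_mem b hn)

theorem mem_of_mem_span_smul_of_mem {κ : Type*} [SetLike κ M] [AddSubmonoidClass κ M]
    {K : κ} {S : Set A} {μ : ιM} (hN : N.IsHomogeneous ℳ)
    (hK : ∀ s ∈ S, ∃ i, s ∈ 𝒜 i ∧ ∀ j, i +ᵥ j = μ → ∀ n ∈ N, n ∈ ℳ j → s • n ∈ K)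
    {m : M} (hm : m ∈ Ideal.span S • N) (hmμ : m ∈ ℳ μ) : m ∈ K :=
  decompose_of_mem_same ℳ hmμ ▸ decompose_mem_of_mem_span_smul 𝒜 hN hK hm

variable {𝒜} [DecidableEq ι] [AddMonoid ι] [AddSubmonoidClass σ A] [GradedRing 𝒜] {I : Ideal A}

theorem isHomogeneous_smul (hI : I.IsHomogeneous 𝒜) (hN : N.IsHomogeneous ℳ) :
    (I • N).IsHomogeneous ℳ := by
  obtain ⟨S, rfl⟩ := (Ideal.IsHomogeneous.iff_exists 𝒜 I).1 hI
  refine fun μ m hm => decompose_mem_of_mem_span_smul 𝒜 hN (fun s hs => ?_) hm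
  obtain ⟨⟨s, i, hsi⟩, hsS, rfl⟩ := hs
  exact ⟨i, hsi, fun _ _ n hn _ =>
    Submodule.smul_mem_smul (Ideal.subset_span (Set.mem_image_of_mem _ hsS)) hn⟩

theorem isHomogeneous_pow_smul (hI : I.IsHomogeneous 𝒜) (hN : N.IsHomogeneous ℳ) (t : ℕ) :
    (I ^ t • N).IsHomogeneous ℳ := by
  induction t with
  | zero => rwa [pow_zero, Ideal.one_eq_top, Submodule.top_smul]
  | succ t ih =>
    rw [pow_succ', Submodule.mul_smul]
    exact isHomogeneous_smul hI ih

end Homogeneous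

section Truncation

variable {ι σ τ A M : Type*} [SetLike σ A]

/-- The ideal `I_{≤ e}` generated by the homogeneous elements of `I` of degree at most `e`. -/
def truncatedIdeal [Semiring A] [LE ι] (𝒜 : ι → σ) (I : Ideal A) (e : ι) : Ideal A :=
  Ideal.span {a : A | a ∈ I ∧ ∃ ν ≤ e, a ∈ 𝒜 ν}

theorem truncatedIdeal_le [Semiring A] [LE ι] (𝒜 : ι → σ) (I : Ideal A) (e : ι) :
    truncatedIdeal 𝒜 I e ≤ I :=
  Ideal.span_le.2 fun _ ha => ha.1

variable [CommSemiring A] [AddSubmonoidClass σ A] [AddCommMonoid M] [Module A M] [SetLike τ M]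
  [AddSubmonoidClass τ M] {I : Ideal A} {N : Submodule A M}

theorem mem_truncatedIdeal_smul_sup [LinearOrder ι] [AddCommMonoid ι] [IsOrderedCancelAddMonoid ι]
    {𝒜 : ι → σ} [GradedRing 𝒜] {ℳ : ι → τ} [Decomposition ℳ] [GradedSMul 𝒜 ℳ] {c e μ : ι}
    {P : Submodule A M} (hI : I.IsHomogeneous 𝒜) (hN : N.IsHomogeneous ℳ)
    (hP : ∀ j < c, ∀ n ∈ N, n ∈ ℳ j → n ∈ P) (hμ : μ ≤ e + c)
    {m : M} (hm : m ∈ I • N) (hmμ : m ∈ ℳ μ) : m ∈ truncatedIdeal 𝒜 I e • N ⊔ I • P := by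
  obtain ⟨S, hS⟩ := (Ideal.IsHomogeneous.iff_exists 𝒜 I).1 hI
  rw [hS] at hm
  refine mem_of_mem_span_smul_of_mem 𝒜 hN (fun s hs => ?_) hm hmμ
  have hsI : s ∈ I := hS ▸ Ideal.subset_span hs
  obtain ⟨⟨s, i, hsi⟩, -, rfl⟩ := hs
  refine ⟨i, hsi, fun j hij n hn hnj => ?_⟩
  obtain hie | hei := le_or_gt i e
  · exact Submodule.mem_sup_left
      (Submodule.smul_mem_smul (Ideal.subset_span ⟨hsI, i, hie, hsi⟩) hn)
  · have hjc : j < c := by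
      by_contra! hcj
      exact (add_lt_add_of_lt_of_le hei hcj).not_ge (hij.trans_le hμ)
    exact Submodule.mem_sup_right (Submodule.smul_mem_smul hsI (hP j hjc n hn hnj))

theorem mem_truncatedIdeal_smul_pow_smul {𝒜 : ℤ → σ} [GradedRing 𝒜] {ℳ : ℤ → τ}
    [Decomposition ℳ] [GradedSMul 𝒜 ℳ] {c d : ℤ} (hI : I.IsHomogeneous 𝒜)
    (hN : N.IsHomogeneous ℳ) (hc : ∀ j < c, ∀ n ∈ N, n ∈ ℳ j → n = 0) (t : ℕ) :
    ∀ μ < c + (t + 1 : ℕ) * d, ∀ m ∈ I ^ (t + 1) • N, m ∈ ℳ μ →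
      m ∈ truncatedIdeal 𝒜 I (d - 1) • I ^ t • N := by
  induction t with
  | zero =>
    intro μ hμ m hm hmμ
    rw [zero_add, pow_one] at hm
    have hmem := mem_truncatedIdeal_smul_sup (P := ⊥) (e := d - 1) hI hN hc (by lia) hm hmμ
    simpa only [pow_zero, Ideal.one_eq_top, Submodule.top_smul, Submodule.smul_bot, sup_bot_eq]
      using hmem
  | succ t ih =>
    intro μ hμ m hm hmμ
    rw [pow_succ', Submodule.mul_smul] at hm
    have hmem := mem_truncatedIdeal_smul_sup (e := d - 1) hI (isHomogeneous_pow_smul hI hN (t + 1))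
      ih (by push_cast at hμ ⊢; linarith) hm hmμ
    have absorb : I • truncatedIdeal 𝒜 I (d - 1) • I ^ t • N =
        truncatedIdeal 𝒜 I (d - 1) • I ^ (t + 1) • N := by
      rw [smul_comm, pow_succ', Submodule.mul_smul]
    rwa [absorb, sup_idem] at hmem

end Truncation

-- Graded Nakayama: elements of `S` have positive degree, so in a product `s • n` of degree `μ` the
-- factor `n` has smaller degree, and induction on `μ` applies.
theorem le_of_forall_ge_mem_span_smul {σ τ A M : Type*} [CommSemiring A] [SetLike σ A]
    {𝒜 : ℤ → σ} [AddCommMonoid M] [Module A M] [SetLike τ M] [AddSubmonoidClass τ M]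
    {ℳ : ℤ → τ} [Decomposition ℳ] [GradedSMul 𝒜 ℳ] {S : Set A} {N K : Submodule A M} {c : ℤ}
    (hS : ∀ s ∈ S, ∃ i > 0, s ∈ 𝒜 i) (hN : N.IsHomogeneous ℳ)
    (hlt : ∀ μ < c, ∀ m ∈ N, m ∈ ℳ μ → m ∈ K)
    (hge : ∀ μ, c ≤ μ → ∀ m ∈ N, m ∈ ℳ μ → m ∈ Ideal.span S • N) : N ≤ K := by
  refine le_of_forall_homogeneous_mem hN fun μ => ?_
  induction μ using Int.strongRec (m := c) with
  | lt μ hμ => exact hlt μ hμ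
  | ge μ hμ ih =>
    intro m hm hmμ
    refine mem_of_mem_span_smul_of_mem 𝒜 hN (fun s hs => ?_) (hge μ hμ m hm hmμ) hmμ
    obtain ⟨i, hi, hsi⟩ := hS s hs
    refine ⟨i, hsi, fun j hij n hn hnj => K.smul_mem s (ih j ?_ n hn hnj)⟩
    rw [vadd_eq_add] at hij
    lia

theorem end_quotient_powers_ge_indeg_add_mul_general {A : Type} [CommRing A]
    (𝒜 : ℤ → AddSubgroup A) [GradedRing 𝒜] {M : Type*} [AddCommGroup M] [Module A M]
    (ℳ : ℤ → AddSubgroup M) [Decomposition ℳ] [GradedSMul 𝒜 ℳ]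
    {m0 : ℤ} (hm0 : m0 ∈ lowerBounds {μ : ℤ | ℳ μ ≠ ⊥})
    {I : Ideal A} (hI : I.IsHomogeneous 𝒜)
    {d : ℤ} (hd : d ∈ lowerBounds {μ : ℤ | ∃ p : ℕ,
      truncatedIdeal 𝒜 I μ • I ^ p • (⊤ : Submodule A M) = I ^ (p + 1) • (⊤ : Submodule A M)})
    (t : ℕ) :
    ∃ μ : ℤ, m0 + t * d ≤ μ ∧ ∃ m : M, m ∈ ℳ μ ∧ m ∈ I ^ t • (⊤ : Submodule A M) ∧
      m ∉ irrelevantIdeal A 𝒜 • I ^ t • (⊤ : Submodule A M) := by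
  by_contra! hcon
  have htop : (⊤ : Submodule A M).IsHomogeneous ℳ := fun _ _ _ => Submodule.mem_top
  have hlow : ∀ j < m0, ∀ n ∈ (⊤ : Submodule A M), n ∈ ℳ j → n = 0 := fun j hj n _ hn => by
    have hbot : ℳ j = ⊥ := by_contra fun hne => hj.not_ge (hm0 hne)
    rwa [hbot, AddSubgroup.mem_bot] at hn
  have generated {K : Submodule A M} (hK : ∀ μ < m0 + t * d,
      ∀ m ∈ I ^ t • (⊤ : Submodule A M), m ∈ ℳ μ → m ∈ K) : I ^ t • ⊤ ≤ K :=
    le_of_forall_ge_mem_span_smul (fun _ hs => hs) (isHomogeneous_pow_smul hI htop t) hK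
      fun μ hμ m hm hmμ => hcon μ hμ m hmμ hm
  suffices ∃ p : ℕ, truncatedIdeal 𝒜 I (d - 1) • I ^ p • (⊤ : Submodule A M) = I ^ (p + 1) • ⊤ from
    (sub_one_lt d).not_ge (hd this)
  cases t with
  | zero =>
    have htriv : (⊤ : Submodule A M) = ⊥ := by
      simpa using generated (K := ⊥) (by simpa using hlow)
    exact ⟨0, by simp only [htriv, Submodule.smul_bot]⟩
  | succ t =>
    refine ⟨t, le_antisymm ?_ (generated (mem_truncatedIdeal_smul_pow_smul hI htop hlow t))⟩
    rw [pow_succ', Submodule.mul_smul]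
    exact Submodule.smul_mono_left (truncatedIdeal_le 𝒜 I _)

/-- **Kodiyalam's lemma.**  Let `A` be a positively graded Noetherian algebra
(generated over `A₀` by finitely many homogeneous elements of positive degree),
`M ≠ 0` a finitely generated graded `A`-module, `I` a graded ideal and
`d := min { μ | ∃ p, (I_{≤μ}) I^p M = I^{p+1} M }`.  Then for every `t ≥ 0`,
`end (I^t M / A₊ I^t M) ≥ indeg M + t d`, i.e. there is a degree
`μ ≥ indeg M + t d` in which the graded module `I^t M / A₊ I^t M` does not vanish. -/
theorem end_quotient_powers_ge_indeg_add_mul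
    (A : Type) [CommRing A] [IsNoetherianRing A]
    (𝒜 : ℤ → AddSubgroup A) [GradedRing 𝒜]
    (hneg : ∀ μ : ℤ, μ < 0 → 𝒜 μ = ⊥)
    (hfg : ∃ (n : ℕ) (x : Fin n → A) (w : Fin n → ℤ),
      (∀ i, 0 < w i) ∧ (∀ i, x i ∈ 𝒜 (w i)) ∧
      Ideal.span (Set.range x) = irrelevantIdeal A 𝒜)
    (M : Type) [AddCommGroup M] [Module A M] [Module.Finite A M]
    (ℳ : ℤ → AddSubgroup M) [DirectSum.Decomposition ℳ] [SetLike.GradedSMul 𝒜 ℳ]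
    (m0 : ℤ) (hm0 : IsLeast {μ : ℤ | ℳ μ ≠ ⊥} m0)
    (I : Ideal A) (hI : ∀ a ∈ I, ∀ μ : ℤ, (DirectSum.decompose 𝒜 a μ : A) ∈ I)
    (d : ℤ)
    (hd : IsLeast {μ : ℤ | ∃ p : ℕ,
      (Ideal.span {a : A | a ∈ I ∧ ∃ ν ≤ μ, a ∈ 𝒜 ν}) • (I ^ p • (⊤ : Submodule A M))
        = I ^ (p + 1) • (⊤ : Submodule A M)} d) :
    ∀ t : ℕ, ∃ μ : ℤ, m0 + t * d ≤ μ ∧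
      ∃ m : M, m ∈ ℳ μ ∧ m ∈ (I ^ t • (⊤ : Submodule A M)) ∧
        m ∉ (irrelevantIdeal A 𝒜) • (I ^ t • (⊤ : Submodule A M)) :=
  end_quotient_powers_ge_indeg_add_mul_general 𝒜 ℳ hm0.2 (fun μ a ha => hI a ha μ) hd.2
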